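/- Let (R, m) be a regular local ring and let B be a big Cohen–Macaulay algebra over R. Then the structure map R → B is faithfully flat; consequently, for every ideal I ⊆ R the preimage of I·B under R → B equals I (that is, IB ∩ R = I). -/

import Mathlib

open Ideal IsLocalRing

/-- A regular local ring: a Noetherian local ring whose maximal ideal can be generated by
`dim R` elements. -/
def IsRegularLocal (A : Type*) [CommRing A] : Prop :=
  IsNoetherianRing A ∧ ∃ h : IsLocalRing A,
    letI := h
    ∃ s : Finset A, Ideal.span (s : Set A) = IsLocalRing.maximalIdeal A ∧
      (s.card : WithBot ℕ∞) = ringKrullDim A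

/-- `B` is a (balanced) big Cohen–Macaulay algebra over the Noetherian local ring `S`:
every system of parameters of `S` is a regular sequence on `B`. -/
noncomputable def IsBigCohenMacaulay (S : Type*) [CommRing S] (hS : IsLocalRing S)
    (B : Type*) [CommRing B] [Algebra S B] : Prop :=
  letI := hS
  ∀ xs : List S, (xs.length : WithBot ℕ∞) = ringKrullDim S →
    (∀ x ∈ xs, x ∈ maximalIdeal S) →
    (Ideal.span {x : S | x ∈ xs}).radical = maximalIdeal S →
    RingTheory.Sequence.IsRegular B (xs.map (algebraMap S B))
open scoped Pointwise

universe u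

/-- `R` is regular local of dimension `d`. -/
def RegD (d : ℕ) (R : Type u) [CommRing R] : Prop :=
  IsNoetherianRing R ∧ ∃ _ : IsLocalRing R, ringKrullDim R = d ∧
    ∃ xs : List R, xs.length = d ∧ Ideal.ofList xs = maximalIdeal R

lemma coset_avoid {R : Type u} [CommRing R] (S : Set (Ideal R)) (hS : S.Finite)
    (hp : ∀ p ∈ S, p.IsPrime) (hinc : ∀ p ∈ S, ∀ q ∈ S, q ≤ p → q = p)
    (x : R) (J : Ideal R) (h : ∀ p ∈ S, x ∈ p → ¬ J ≤ p) :
    ∃ a ∈ J, ∀ p ∈ S, x + a ∉ p := by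
  classical
  set S1 : Set (Ideal R) := {p ∈ S | x ∈ p}
  have hS1 : S1.Finite := hS.subset (Set.sep_subset _ _)
  have hS2 : {p ∈ S | x ∉ p}.Finite := hS.subset (Set.sep_subset _ _)
  set I : Ideal R := J ⊓ hS2.toFinset.inf id
  have key : ¬ ((I : Set R) ⊆ ⋃ p ∈ S1, (p : Set R)) := by
    intro hsub
    obtain ⟨p, hp1, hle⟩ := (Ideal.subset_union_prime_finite hS1 (f := id) ⊥ ⊥
      (fun p h _ _ => hp p h.1)).1 hsub
    have hpp := hp p hp1.1
    rcases (hpp.inf_le).1 hle with h1 | h1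
    · exact h p hp1.1 hp1.2 h1
    · obtain ⟨q, hq, hqp⟩ := (hpp.inf_le').1 h1
      simp only [Set.Finite.mem_toFinset] at hq
      have := hinc p hp1.1 q hq.1 hqp
      exact hq.2 (this ▸ hp1.2)
  obtain ⟨a, haI, ha⟩ := Set.not_subset.1 key
  simp only [Set.mem_iUnion, not_exists] at ha
  refine ⟨a, haI.1, fun p hpS hxa => ?_⟩
  by_cases hx : x ∈ p
  · exact ha p ⟨hpS, hx⟩ ((p.add_mem_iff_right hx).1 hxa)
  · have hap : a ∈ p := by
      have : hS2.toFinset.inf id ≤ p := Finset.inf_le (f := id) (by simp [hpS, hx])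
      exact this haI.2
    exact hx ((p.add_mem_iff_left hap).1 hxa)

lemma RegD.step0 {d : ℕ} {R : Type u} [CommRing R] (h : RegD (d + 1) R) :
    ∃ x : R, (∀ p ∈ minimalPrimes R, x ∉ p) ∧ RegD d (R ⧸ span {x}) ∧ ¬ IsUnit x := by
  obtain ⟨hN, hL, hdim, xs, hlen, hxs⟩ := h
  obtain _ | ⟨y, ys⟩ := xs
  · simp at hlen
  have hsup : span {y} ⊔ ofList ys = maximalIdeal R := by rw [← hxs, ofList_cons]
  have hnotmin : ∀ p ∈ minimalPrimes R, ¬ maximalIdeal R ≤ p := by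
    intro p hp hle
    have hpp : p.IsPrime := hp.1.1
    have hpm : p = maximalIdeal R := (((maximalIdeal.isMaximal R).eq_of_le hpp.ne_top hle)).symm
    have h0 : (maximalIdeal R).height = 0 := by
      rw [← hpm]; exact Ideal.height_eq_zero_iff.2 hp
    have := IsLocalRing.maximalIdeal_height_eq_ringKrullDim (R := R)
    rw [h0, hdim] at this
    norm_cast at this
  obtain ⟨a, haJ, ha⟩ := coset_avoid (minimalPrimes R) (minimalPrimes.finite_of_isNoetherianRing R)
    (fun p hp => hp.1.1) (fun p hp q hq hle => le_antisymm hle (hp.2 hq.1 hle)) y (ofList ys)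
    (fun p hp hy hle => hnotmin p hp (hsup ▸ sup_le ((span_singleton_le_iff_mem _).2 hy) hle))
  set x := y + a
  have hmx : span {x} ⊔ ofList ys = maximalIdeal R := by
    rw [← hsup]
    apply le_antisymm
    · refine sup_le ((span_singleton_le_iff_mem _).2 ?_) le_sup_right
      exact add_mem (Ideal.mem_sup_left (mem_span_singleton_self y)) (Ideal.mem_sup_right haJ)
    · refine sup_le ((span_singleton_le_iff_mem _).2 ?_) le_sup_right
      have : y = x - a := by simp [x]
      rw [this]
      exact sub_mem (Ideal.mem_sup_left (mem_span_singleton_self x)) (Ideal.mem_sup_right haJ)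
  have hxm : x ∈ maximalIdeal R := hmx ▸ Ideal.mem_sup_left (mem_span_singleton_self x)
  have hne : span {x} ≠ (⊤ : Ideal R) := fun h => (Ideal.IsPrime.ne_top (maximalIdeal.isMaximal R).isPrime)
    (top_le_iff.1 (h ▸ (span_singleton_le_iff_mem _).2 hxm))
  have : Nontrivial (R ⧸ span {x}) := Ideal.Quotient.nontrivial_iff.2 hne
  have hL' : IsLocalRing (R ⧸ span {x}) :=
    IsLocalRing.of_surjective' (Ideal.Quotient.mk _) Ideal.Quotient.mk_surjective
  refine ⟨x, ha, ⟨inferInstance, hL', ?_, ys.map (Ideal.Quotient.mk _), by simpa using hlen, ?_⟩, hxm⟩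
  · have h1 := Module.supportDim_quotSMulTop_succ_eq_of_notMem_minimalPrimes_of_mem_maximalIdeal
      (M := R) (x := x) (by
        have : Module.annihilator R R = ⊥ :=
          Module.annihilator_eq_bot.mpr inferInstance
        rw [this]; exact ha) hxm
    have h2 : span {x} = x • (⊤ : Ideal R) := by simp [← Submodule.ideal_span_singleton_smul]
    rw [Module.supportDim_self_eq_ringKrullDim, hdim] at h1
    rw [ringKrullDim_eq_of_ringEquiv (quotientEquivAlgOfEq R h2).toRingEquiv,
      ← Module.supportDim_quotient_eq_ringKrullDim]
    generalize Module.supportDim R (R ⧸ x • (⊤ : Ideal R)) = t at *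
    change t + 1 = _ at h1
    push_cast at h1
    exact (ENat.WithBot.add_one_cancel).1 h1
  · rw [← Ideal.map_ofList]
    have : map (Ideal.Quotient.mk (span {x})) (maximalIdeal R) = map (Ideal.Quotient.mk (span {x})) (ofList ys) := by
      rw [← hmx, Ideal.map_sup, Ideal.map_quotient_self, bot_sup_eq]
    rw [← this]
    exact (IsLocalRing.map_maximalIdeal_of_surjective _ Ideal.Quotient.mk_surjective)

lemma RegD.isDomain : ∀ (d : ℕ) (R : Type u) [CommRing R], RegD d R → IsDomain R := by
  intro d
  induction d with
  | zero =>
    rintro R _ ⟨hN, hL, hdim, xs, hlen, hxs⟩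
    have : xs = [] := by simpa using hlen
    subst this
    have := IsLocalRing.isField_iff_maximalIdeal_eq.2 (hxs.symm.trans (by simp))
    exact this.isDomain
  | succ d ih =>
    intro R _ h
    obtain ⟨x, hx, hq, hu⟩ := h.step0
    obtain ⟨hN, hL, -⟩ := h
    have hdom := ih _ hq
    have hpr : (span {x}).IsPrime := (Ideal.Quotient.isDomain_iff_prime _).1 hdom
    obtain ⟨p, hp, hple⟩ := Ideal.exists_minimalPrimes_le (bot_le : ⊥ ≤ span {x})
    have hpp : p.IsPrime := hp.1.1
    have hbot : p = ⊥ := by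
      apply Submodule.eq_bot_of_le_smul_of_le_jacobson_bot (maximalIdeal R) p
        (IsNoetherian.noetherian p)
      · intro y hy
        obtain ⟨z, rfl⟩ := mem_span_singleton'.1 (hple hy)
        have hz : z ∈ p := (hpp.mem_or_mem hy).resolve_right (hx p hp)
        rw [mul_comm]
        exact Submodule.smul_mem_smul (M := R) hu hz
      · exact (IsLocalRing.jacobson_eq_maximalIdeal ⊥ bot_ne_top).ge
    rw [hbot] at hpp
    exact IsDomain.of_bot_isPrime R

lemma RegD.step {d : ℕ} {R : Type u} [CommRing R] (h : RegD (d + 1) R) :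
    ∃ x : R, IsSMulRegular R x ∧ RegD d (R ⧸ span {x}) ∧ ¬ IsUnit x := by
  have := RegD.isDomain _ _ h
  obtain ⟨x, hx, hq, hu⟩ := h.step0
  refine ⟨x, ?_, hq, hu⟩
  have hx0 : x ≠ 0 := by
    rintro rfl
    obtain ⟨p, hp⟩ := Ideal.nonempty_minimalPrimes (bot_ne_top : (⊥ : Ideal R) ≠ ⊤)
    exact hx p hp (zero_mem _)
  intro a b hab
  exact mul_left_cancel₀ hx0 hab

lemma RegD.isField {R : Type u} [CommRing R] (h : RegD 0 R) : IsField R := by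
  obtain ⟨hN, hL, hdim, xs, hlen, hxs⟩ := h
  have : xs = [] := by simpa using hlen
  subst this
  exact IsLocalRing.isField_iff_maximalIdeal_eq.2 (hxs.symm.trans (by simp))

/-- elementary projective dimension bound via iterated syzygies -/
def PD (R : Type u) [CommRing R] : ℕ → (M : Type u) → [AddCommGroup M] → [Module R M] → Prop
  | 0, M, _, _ => Module.Free R M
  | n + 1, M, _, _ => ∀ (F : Type u) [AddCommGroup F] [Module R F] [Module.Free R F]
      [Module.Finite R F] (f : F →ₗ[R] M), Function.Surjective f → PD R n (LinearMap.ker f)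

lemma PD.of_equiv {R : Type u} [CommRing R] : ∀ (n : ℕ) {M M' : Type u} [AddCommGroup M]
    [Module R M] [AddCommGroup M'] [Module R M'] (_ : M ≃ₗ[R] M'), PD R n M → PD R n M' := by
  intro n
  induction n with
  | zero => intro M M' _ _ _ _ e h; exact Module.Free.of_equiv' h e
  | succ n ih =>
    intro M M' _ _ _ _ e h F _ _ _ _ f hf
    refine ih (LinearEquiv.ofEq _ _ ?_) (h F (e.symm.toLinearMap ∘ₗ f) (e.symm.surjective.comp hf))
    ext; simp

lemma PD.lift {R : Type u} [CommRing R] [IsNoetherianRing R] [IsLocalRing R] {x : R}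
    (hx : x ∈ maximalIdeal R) (hreg : IsSMulRegular R x) :
    ∀ (n : ℕ) (K : Type u) [AddCommGroup K] [Module R K] [Module.Finite R K]
      (_ : IsSMulRegular K x), PD (R ⧸ span {x}) n (QuotSMulTop x K) → PD R n K := by
  intro n
  induction n with
  | zero =>
    intro K _ _ _ hK h
    have : Module.FinitePresentation R K := Module.finitePresentation_of_finite R K
    refine (Module.free_quotSMulTop_iff_free R K (x := x) ?_ hK).1 h
    exact (IsLocalRing.jacobson_eq_maximalIdeal ⊥ bot_ne_top).ge hx
  | succ n ih =>
    intro K _ _ _ hK h F _ _ _ _ f hf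
    have hFx : IsSMulRegular F x := by
      have : Module.Flat R F := inferInstance
      have := IsSMulRegular.lTensor F hreg
      exact ((TensorProduct.rid R F).isSMulRegular_congr x).1 this
    have hker : IsSMulRegular (LinearMap.ker f) x := hFx.submodule _ _
    refine ih _ hker ?_
    have hs : Function.Surjective (Ideal.Quotient.mk (span {x})) := Ideal.Quotient.mk_surjective
    have hs' : Function.Surjective (algebraMap R (R ⧸ span {x})) := Ideal.Quotient.mk_surjective
    set g : QuotSMulTop x F →ₗ[R ⧸ span {x}] QuotSMulTop x K :=
      (QuotSMulTop.map x f).extendScalarsOfSurjective hs'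
    have hg : Function.Surjective g := QuotSMulTop.map_surjective x hf
    set i : QuotSMulTop x (LinearMap.ker f) →ₗ[R ⧸ span {x}] QuotSMulTop x F :=
      (QuotSMulTop.map x (LinearMap.ker f).subtype).extendScalarsOfSurjective hs'
    have hex : Function.Exact i g := QuotSMulTop.map_exact x (f.exact_subtype_ker_map) hf
    have hi : Function.Injective i := by
      rw [injective_iff_map_eq_zero]
      intro a ha
      obtain ⟨a, rfl⟩ := Submodule.mkQ_surjective _ a
      have h2 : (Submodule.Quotient.mk (a : F) : QuotSMulTop x F) = 0 := ha
      rw [Submodule.Quotient.mk_eq_zero, Submodule.mem_smul_pointwise_iff_exists] at h2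
      obtain ⟨z, -, hz⟩ := h2
      have hz0 : f z = 0 := by
        apply hK
        simp only [smul_zero]
        rw [← map_smul, hz]; exact a.2
      rw [Submodule.mkQ_apply, Submodule.Quotient.mk_eq_zero, Submodule.mem_smul_pointwise_iff_exists]
      exact ⟨⟨z, hz0⟩, trivial, Subtype.ext hz⟩
    have : Module.Finite (R ⧸ span {x}) (QuotSMulTop x F) :=
      Module.Finite.of_restrictScalars_finite R _ _
    have hPD := h (QuotSMulTop x F) g hg
    refine PD.of_equiv n ?_ hPD
    exact (LinearEquiv.ofEq _ _ (LinearMap.exact_iff.1 hex)).trans (LinearEquiv.ofInjective i hi).symm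

lemma RegD.pd : ∀ (d : ℕ) (R : Type u) [CommRing R], RegD d R →
    ∀ (M : Type u) [AddCommGroup M] [Module R M] [Module.Finite R M], PD R d M := by
  intro d
  induction d with
  | zero =>
    intro R _ h M _ _ _
    let _ := h.isField.toField
    change Module.Free R M
    exact Module.Free.of_divisionRing R M
  | succ d ih =>
    intro R _ h M _ _ _ F _ _ _ _ f hf
    obtain ⟨x, hx, hq, hu⟩ := h.step
    obtain ⟨hN, hL, -⟩ := h
    have hFx : IsSMulRegular F x := by
      have := IsSMulRegular.lTensor F hx
      exact ((TensorProduct.rid R F).isSMulRegular_congr x).1 this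
    refine PD.lift hu hx d _ (hFx.submodule _ _) ?_
    have : Module.Finite (R ⧸ span {x}) (QuotSMulTop x (LinearMap.ker f)) :=
      Module.Finite.of_restrictScalars_finite R _ _
    exact ih _ hq _

open CategoryTheory in
lemma PD.hasPD {R : Type u} [CommRing R] [IsNoetherianRing R] : ∀ (n : ℕ) (M : Type u)
    [AddCommGroup M] [Module R M] [Module.Finite R M], PD R n M →
    HasProjectiveDimensionLE (ModuleCat.of R M) n := by
  intro n
  induction n with
  | zero =>
    intro M _ _ _ h
    have : Module.Free R M := h
    rw [← projective_iff_hasProjectiveDimensionLE_zero]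
    infer_instance
  | succ n ih =>
    intro M _ _ _ h
    obtain ⟨k, f, hf⟩ := Module.Finite.exists_fin' R M
    have h1 := ih _ (h _ f hf)
    let S : ShortComplex (ModuleCat.{u} R) := ModuleCat.shortComplexOfCompEqZero
      (LinearMap.ker f).subtype f (by ext; simp)
    have hS : S.ShortExact := ModuleCat.shortComplex_shortExact S (f.exact_subtype_ker_map)
      (Submodule.injective_subtype _) hf
    have hP : Projective S.X₂ := by
      change Projective (ModuleCat.of R (Fin k → R)); infer_instance
    exact (hS.hasProjectiveDimensionLT_X₃_iff n hP).2 h1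

open RingTheory.Sequence

lemma RegD.exists_regular : ∀ (d : ℕ) (R : Type u) [CommRing R] [IsLocalRing R], RegD d R →
    ∃ zs : List R, zs.length = d ∧ IsRegular R zs ∧ Ideal.ofList zs = maximalIdeal R := by
  intro d
  induction d with
  | zero =>
    intro R _ _ h
    obtain ⟨_, _, hd, xs, hl, hx⟩ := h
    obtain rfl : xs = [] := List.length_eq_zero_iff.1 hl
    exact ⟨[], rfl, IsRegular.nil R R, hx⟩
  | succ d ih =>
    intro R _ _ h
    obtain ⟨x, hx, hS, hu⟩ := RegD.step h
    have hxm : x ∈ maximalIdeal R := hu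
    have : IsLocalRing (R ⧸ span {x}) := by obtain ⟨_, h, _⟩ := hS; exact h
    obtain ⟨zs', hl, hreg, hz⟩ := ih _ hS
    obtain ⟨zs, rfl⟩ : ∃ zs : List R, zs.map (Ideal.Quotient.mk (span {x})) = zs' :=
      List.map_surjective_iff.2 Ideal.Quotient.mk_surjective zs'
    refine ⟨x :: zs, by simpa using hl, ?_, ?_⟩
    · rw [isRegular_cons_iff']
      refine ⟨hx, ?_⟩
      have e : (R ⧸ span {x}) ≃ₗ[R] QuotSMulTop x R :=
        Submodule.quotEquivOfEq _ _ (by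
          rw [← Submodule.ideal_span_singleton_smul]; simp)
      have hs' : Function.Surjective (algebraMap R (R ⧸ span {x})) := Ideal.Quotient.mk_surjective
      exact (LinearEquiv.isRegular_congr (e.extendScalarsOfSurjective hs') _).1 hreg
    · rw [Ideal.ofList_cons]
      rw [← Ideal.map_ofList] at hz
      have := congrArg (Ideal.comap (Ideal.Quotient.mk (span {x}))) hz
      rw [Ideal.comap_map_of_surjective _ Ideal.Quotient.mk_surjective] at this
      have h2 : comap (Ideal.Quotient.mk (span {x})) ⊥ = span {x} := Ideal.mk_ker
      rw [h2, sup_comm] at this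
      rw [this]
      have : IsLocalHom (Ideal.Quotient.mk (span {x})) :=
        IsLocalHom.of_surjective _ Ideal.Quotient.mk_surjective
      exact ((IsLocalRing.local_hom_TFAE (Ideal.Quotient.mk (span {x}))).out 0 4).1 this

open CategoryTheory in
lemma pd_quot_ofList {R : Type u} [CommRing R] [IsLocalRing R] [IsNoetherianRing R]
    (zs : List R) (hreg : IsRegular R zs) :
    projectiveDimension (ModuleCat.of R (R ⧸ Ideal.ofList zs)) = zs.length := by
  rw [← ModuleCat.projectiveDimension_quotient_eq_length.{u} zs hreg]
  exact projectiveDimension_eq_of_iso (Shrink.linearEquiv R (R ⧸ Ideal.ofList zs)).symm.toModuleIso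

open CategoryTheory in
lemma RegD.not_hasPD {d : ℕ} {R : Type u} [CommRing R] [IsLocalRing R] (h : RegD d R) :
    ¬ HasProjectiveDimensionLT (ModuleCat.of R (R ⧸ maximalIdeal R)) d := by
  obtain ⟨zs, hl, hreg, hz⟩ := RegD.exists_regular d R h
  have : IsNoetherianRing R := h.1
  have := pd_quot_ofList zs hreg
  rw [hz, hl] at this
  rw [← projectiveDimension_ge_iff, this]

lemma IsRegular.mem_max {R : Type u} [CommRing R] [IsLocalRing R] {xs : List R}
    (h : IsRegular R xs) : ∀ x ∈ xs, x ∈ maximalIdeal R := by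
  intro x hx
  have h2 : Ideal.ofList xs ≠ ⊤ := by
    have := h.top_ne_smul.symm
    simpa using this
  exact IsLocalRing.le_maximalIdeal h2 (Ideal.subset_span hx)

open CategoryTheory in
/-- In a regular ring no proper regular sequence of length `< d` kills depth. -/
lemma RegD.max_not_assoc {d : ℕ} {R : Type u} [CommRing R] [IsLocalRing R] (h : RegD d R)
    (xs : List R) (hxs : IsRegular R xs) (hl : xs.length < d) :
    ¬ IsAssociatedPrime (maximalIdeal R) (R ⧸ Ideal.ofList xs) := by
  intro hass
  have : IsNoetherianRing R := h.1
  obtain ⟨-, a, ha⟩ := isAssociatedPrime_iff.1 hass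
  let g : R →ₗ[R] R ⧸ Ideal.ofList xs := LinearMap.toSpanSingleton R _ a
  have hk : maximalIdeal R = LinearMap.ker g := by
    rw [ha]; ext r; simp [g, Submodule.mem_colon_singleton]
  let f : (R ⧸ maximalIdeal R) →ₗ[R] R ⧸ Ideal.ofList xs :=
    (maximalIdeal R).liftQ g hk.le
  have hf : Function.Injective f := by
    rw [← LinearMap.ker_eq_bot]; exact Submodule.ker_liftQ_eq_bot _ _ _ hk.ge
  let S : ShortComplex (ModuleCat.{u} R) := ModuleCat.shortComplexOfCompEqZero
      f (LinearMap.range f).mkQ (by ext; simp)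
  have hS : S.ShortExact := ModuleCat.shortComplex_shortExact S
      (f.exact_map_mkQ_range) hf (Submodule.mkQ_surjective _)
  have h2 : HasProjectiveDimensionLT S.X₂ d := by
    rw [← projectiveDimension_lt_iff]
    have := pd_quot_ofList xs hxs
    change projectiveDimension (ModuleCat.of R (R ⧸ Ideal.ofList xs)) < _
    rw [this]; exact_mod_cast hl
  have h3 : HasProjectiveDimensionLT S.X₃ (d + 1) :=
    PD.hasPD d ((R ⧸ Ideal.ofList xs) ⧸ LinearMap.range f) (RegD.pd d R h _)
  exact RegD.not_hasPD h (hS.hasProjectiveDimensionLT_X₁ d h2 h3)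

lemma isRegular_extend {d : ℕ} {R : Type u} [CommRing R] [IsLocalRing R] (h : RegD d R)
    (xs : List R) (hxs : IsRegular R xs) (hl : xs.length < d) :
    ∃ y, IsRegular R (xs ++ [y]) := by
  have : IsNoetherianRing R := h.1
  have hna := RegD.max_not_assoc h xs hxs hl
  have : ∃ y ∈ maximalIdeal R, IsSMulRegular (R ⧸ Ideal.ofList xs) y := by
    by_contra! hcon
    apply hna
    have hsub : (maximalIdeal R : Set R) ⊆ ⋃ p ∈ associatedPrimes R (R ⧸ Ideal.ofList xs), p := by
      intro y hy
      rw [biUnion_associatedPrimes_eq_compl_regular]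
      exact hcon y hy
    have hfin := associatedPrimes.finite R (R ⧸ Ideal.ofList xs)
    obtain ⟨p, hp, hle⟩ := (Ideal.subset_union_prime_finite hfin (f := id) ⊥ ⊥
      (fun p hp _ _ => hp.1)).1 hsub
    have := (IsLocalRing.maximalIdeal.isMaximal R).eq_of_le hp.1.ne_top hle
    rw [this]; exact hp
  obtain ⟨y, hy, hyr⟩ := this
  refine ⟨y, (IsLocalRing.isRegular_iff_isWeaklyRegular_of_subset_maximalIdeal ?_).2 ?_⟩
  · intro r hr
    rcases List.mem_append.1 hr with hr | hr
    · exact IsRegular.mem_max hxs r hr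
    · rw [List.mem_singleton.1 hr]; exact hy
  · rw [isWeaklyRegular_append_iff]
    refine ⟨hxs.1, ?_⟩
    rw [isWeaklyRegular_singleton_iff]
    have e : (R ⧸ Ideal.ofList xs) ≃ₗ[R] R ⧸ (Ideal.ofList xs • ⊤ : Submodule R R) :=
        Submodule.quotEquivOfEq _ _ (by simp)
    exact (e.isSMulRegular_congr y).1 hyr

lemma isRegular_length_le {d : ℕ} {R : Type u} [CommRing R] [IsLocalRing R] (h : RegD d R)
    (xs : List R) (hxs : IsRegular R xs) : 
    ringKrullDim (R ⧸ Ideal.ofList xs) + xs.length = d ∧ xs.length ≤ d := by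
  have : IsNoetherianRing R := h.1
  have h2 := ringKrullDim_add_length_eq_ringKrullDim_of_isRegular xs hxs
  obtain ⟨_, _, hd, _⟩ := h
  rw [hd] at h2
  refine ⟨h2, ?_⟩
  have : Nontrivial (R ⧸ Ideal.ofList xs) := by
    have := hxs.top_ne_smul.symm
    exact Ideal.Quotient.nontrivial_iff.2 (by simpa using this)
  have h3 : (0 : WithBot ℕ∞) ≤ ringKrullDim (R ⧸ Ideal.ofList xs) := ringKrullDim_nonneg_of_nontrivial
  have : (xs.length : WithBot ℕ∞) ≤ d := by
    rw [← h2]; exact le_add_of_nonneg_left h3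
  exact_mod_cast this

lemma isRegular_extend_full {d : ℕ} {R : Type u} [CommRing R] [IsLocalRing R] (h : RegD d R) :
    ∀ (k : ℕ) (xs : List R) (_ : IsRegular R xs) (_ : xs.length + k = d),
    ∃ ys, ys.length = k ∧ IsRegular R (xs ++ ys) := by
  intro k
  induction k with
  | zero => intro xs hxs _; exact ⟨[], rfl, by simpa using hxs⟩
  | succ k ih =>
    intro xs hxs hl
    obtain ⟨y, hy⟩ := isRegular_extend h xs hxs (by omega)
    obtain ⟨ys, h1, h2⟩ := ih (xs ++ [y]) hy (by simp; omega)
    exact ⟨y :: ys, by simp [h1], by simpa using h2⟩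

lemma assoc_coheight {R : Type u} [CommRing R] [IsNoetherianRing R] [IsLocalRing R] :
    ∀ (ys : List R) (_ : ∀ y ∈ ys, y ∈ maximalIdeal R) (M : Type u) [AddCommGroup M] [Module R M]
      [Module.Finite R M] (_ : IsWeaklyRegular M ys) (p : PrimeSpectrum R)
      (_ : IsAssociatedPrime p.asIdeal M), (ys.length : ℕ∞) ≤ Order.coheight p := by
  intro ys
  induction ys with
  | nil => intros; simp
  | cons x ys ih =>
    intro hmem M _ _ _ hreg p hp
    rw [isWeaklyRegular_cons_iff] at hreg
    obtain ⟨hx, hys⟩ := hreg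
    obtain ⟨-, a, ha⟩ := isAssociatedPrime_iff.1 hp
    have ha0 : a ≠ 0 := by
      rintro rfl
      apply p.isPrime.ne_top
      rw [ha]; ext; simp [Submodule.mem_colon_singleton]
    let N : Submodule R M := Submodule.torsionBySet R M p.asIdeal
    have haN : a ∈ N := by
      rw [Submodule.mem_torsionBySet_iff]
      rintro ⟨r, hr⟩
      have : r ∈ p.asIdeal := hr
      rw [ha, Submodule.mem_colon_singleton] at this
      simpa using this
    have hxm : x ∈ maximalIdeal R := hmem x (by simp)
    have hb : ∃ b ∈ N, b ∉ (x • ⊤ : Submodule R M) := by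
      by_contra! hcon
      have : N = ⊥ := by
        refine Submodule.eq_bot_of_le_smul_of_le_jacobson_bot (span {x}) N
          (IsNoetherian.noetherian N) ?_ ?_
        · intro b hb
          have := hcon b hb
          rw [Submodule.mem_smul_pointwise_iff_exists] at this
          obtain ⟨c, -, hc⟩ := this
          rw [Submodule.ideal_span_singleton_smul, Submodule.mem_smul_pointwise_iff_exists]
          refine ⟨c, ?_, hc⟩
          rw [Submodule.mem_torsionBySet_iff] at hb ⊢
          intro r
          apply hx
          have := hb r
          rw [← hc, smul_comm] at this
          simpa using this
        · rw [IsLocalRing.jacobson_eq_maximalIdeal ⊥ bot_ne_top, Ideal.span_le]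
          simpa using hxm
      rw [this] at haN
      exact ha0 (by simpa using haN)
    obtain ⟨b, hbN, hbx⟩ := hb
    obtain ⟨q, hq, hle⟩ := exists_le_isAssociatedPrime_of_isNoetherianRing R
      (Submodule.Quotient.mk b : QuotSMulTop x M) (by
        rw [Ne, Submodule.Quotient.mk_eq_zero]; exact hbx)
    have hpq : p.asIdeal ≤ q := by
      intro r hr
      apply hle
      rw [Submodule.mem_colon_singleton, ← Submodule.Quotient.mk_smul]
      rw [Submodule.mem_torsionBySet_iff] at hbN
      have := hbN ⟨r, hr⟩
      simp only at this
      rw [this]; simp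
    have hxq : x ∈ q := by
      apply hle
      rw [Submodule.mem_colon_singleton, ← Submodule.Quotient.mk_smul, Submodule.mem_bot,
        Submodule.Quotient.mk_eq_zero]
      exact Submodule.smul_mem_pointwise_smul _ _ _ trivial
    have hxp : x ∉ p.asIdeal := by
      intro h
      rw [ha, Submodule.mem_colon_singleton, Submodule.mem_bot] at h
      apply ha0
      apply hx
      simpa using h
    have hlt : p < (⟨q, hq.1⟩ : PrimeSpectrum R) := by
      refine lt_of_le_of_ne hpq ?_
      intro h
      apply hxp
      rw [h]; exact hxq
    have h1 := ih (fun y hy => hmem y (by simp [hy])) (QuotSMulTop x M) hys ⟨q, hq.1⟩ hq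
    have h2 := Order.coheight_add_one_le hlt
    refine le_trans ?_ h2
    rw [List.length_cons, Nat.cast_add, Nat.cast_one]
    gcongr

lemma coheight_le_quot {R : Type u} [CommRing R] (I : Ideal R) (p : PrimeSpectrum R)
    (h : I ≤ p.asIdeal) : (Order.coheight p : WithBot ℕ∞) ≤ ringKrullDim (R ⧸ I) := by
  rw [ringKrullDim_quotient, Order.coheight_eq_krullDim_Ici]
  have hsub : Set.Ici p ⊆ PrimeSpectrum.zeroLocus (R := R) I := by
    intro q hq
    exact h.trans hq
  exact Order.krullDim_le_of_strictMono (Set.inclusion hsub) (fun a b hab => hab)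

lemma exists_isRegular_assoc {d : ℕ} {R : Type u} [CommRing R] [IsLocalRing R] (h : RegD d R)
    (p : Ideal R) [hp : p.IsPrime] :
    ∃ xs : List R, IsRegular R xs ∧ IsAssociatedPrime p (R ⧸ Ideal.ofList xs) := by
  have : IsNoetherianRing R := h.1
  obtain ⟨xs, hxs, hxp, hmax⟩ : ∃ xs : List R, IsRegular R xs ∧ (∀ x ∈ xs, x ∈ p) ∧
      ∀ xs' : List R, IsRegular R xs' → (∀ x ∈ xs', x ∈ p) → xs'.length ≤ xs.length := by
    let P : ℕ → Prop := fun n => ∃ xs : List R, IsRegular R xs ∧ (∀ x ∈ xs, x ∈ p) ∧ xs.length = n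
    classical
    have h0 : P 0 := ⟨[], IsRegular.nil R R, by simp, rfl⟩
    obtain ⟨xs, h1, h2, h3⟩ := Nat.findGreatest_spec (P := P) (Nat.zero_le d) h0
    refine ⟨xs, h1, h2, fun xs' h1' h2' => ?_⟩
    rw [h3]
    exact Nat.le_findGreatest (isRegular_length_le h xs' h1').2 ⟨xs', h1', h2', rfl⟩
  refine ⟨xs, hxs, ?_⟩
  have e : (R ⧸ Ideal.ofList xs) ≃ₗ[R] R ⧸ (Ideal.ofList xs • ⊤ : Submodule R R) :=
        Submodule.quotEquivOfEq _ _ (by simp)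
  obtain ⟨q, hq, hpq⟩ : ∃ q ∈ associatedPrimes R (R ⧸ Ideal.ofList xs), p ≤ q := by
    refine (Ideal.subset_union_prime_finite (associatedPrimes.finite R (R ⧸ Ideal.ofList xs))
      (f := id) ⊥ ⊥ (fun p hp _ _ => hp.1)).1 ?_
    change (p : Set R) ⊆ ⋃ p ∈ associatedPrimes R (R ⧸ Ideal.ofList xs), p
    rw [biUnion_associatedPrimes_eq_compl_regular]
    intro y hy hyr
    have hyr : IsSMulRegular (R ⧸ Ideal.ofList xs) y := hyr
    have := hmax (xs ++ [y]) ?_ ?_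
    · simp at this
    · refine (IsLocalRing.isRegular_iff_isWeaklyRegular_of_subset_maximalIdeal ?_).2 ?_
      · intro r hr
        rcases List.mem_append.1 hr with hr | hr
        · exact IsRegular.mem_max hxs r hr
        · rw [List.mem_singleton.1 hr]; exact IsLocalRing.le_maximalIdeal hp.ne_top hy
      · rw [isWeaklyRegular_append_iff]
        refine ⟨hxs.1, ?_⟩
        rw [isWeaklyRegular_singleton_iff]
        exact (e.isSMulRegular_congr y).1 hyr
    · intro r hr
      rcases List.mem_append.1 hr with hr | hr
      · exact hxp r hr
      · rw [List.mem_singleton.1 hr]; exact hy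
  obtain ⟨hdim, hlen⟩ := isRegular_length_le h xs hxs
  obtain ⟨k, hk⟩ := Nat.exists_eq_add_of_le hlen
  obtain ⟨ys, hyl, hys⟩ := isRegular_extend_full h k xs hxs hk.symm
  have hysw := ((isWeaklyRegular_append_iff R xs ys).1 hys.1).2
  have hysw := (e.isWeaklyRegular_congr ys).2 hysw
  have h1 := assoc_coheight ys (fun y hy => IsRegular.mem_max hys y (by simp [hy])) _ hysw
    ⟨q, hq.1⟩ hq
  have hpqe : p = q := by
    by_contra hne
    have hlt : (⟨p, hp⟩ : PrimeSpectrum R) < ⟨q, hq.1⟩ :=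
      lt_of_le_of_ne hpq (fun h => hne (congrArg PrimeSpectrum.asIdeal h))
    have h2 := Order.coheight_add_one_le hlt
    have h3 := coheight_le_quot (Ideal.ofList xs) ⟨p, hp⟩ (Ideal.span_le.2 hxp)
    have h4 : ((ys.length + 1 : ℕ) : ℕ∞) ≤ Order.coheight (⟨p, hp⟩ : PrimeSpectrum R) := by
      refine le_trans ?_ h2
      rw [Nat.cast_add, Nat.cast_one]
      gcongr
    have h5 : ((k + 1 : ℕ) : WithBot ℕ∞) ≤ ringKrullDim (R ⧸ Ideal.ofList xs) := by
      refine le_trans ?_ h3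
      rw [hyl] at h4
      exact_mod_cast h4
    have h6 : ((k + 1 + xs.length : ℕ) : WithBot ℕ∞) ≤ d := by
      rw [← hdim]; push_cast; push_cast at h5; gcongr
    have h7 : k + 1 + xs.length ≤ d := by exact_mod_cast h6
    omega
  rw [hpqe]; exact hq

universe v

open TensorProduct

lemma chase {R : Type*} [CommRing R] {A1 A2 A3 B1 B2 B3 C1 C2 : Type*}
    [AddCommGroup A1] [AddCommGroup A2] [AddCommGroup A3] [AddCommGroup B1] [AddCommGroup B2]
    [AddCommGroup B3] [AddCommGroup C1] [AddCommGroup C2]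
    [Module R A1] [Module R A2] [Module R A3] [Module R B1] [Module R B2] [Module R B3]
    [Module R C1] [Module R C2]
    (a : A1 →ₗ[R] A2) (a' : A2 →ₗ[R] A3) (b : B1 →ₗ[R] B2) (b' : B2 →ₗ[R] B3) (c : C1 →ₗ[R] C2)
    (α1 : A1 →ₗ[R] B1) (β1 : B1 →ₗ[R] C1) (α2 : A2 →ₗ[R] B2) (β2 : B2 →ₗ[R] C2)
    (α3 : A3 →ₗ[R] B3)
    (ha : Function.Exact a a') (hb : Function.Injective b) (hb' : b' ∘ₗ b = 0)
    (hβ1 : Function.Surjective β1) (hαβ1 : β1 ∘ₗ α1 = 0) (h2 : Function.Exact α2 β2)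
    (hα3 : Function.Injective α3)
    (e1 : b ∘ₗ α1 = α2 ∘ₗ a) (e2 : b' ∘ₗ α2 = α3 ∘ₗ a') (e3 : c ∘ₗ β1 = β2 ∘ₗ b) :
    Function.Injective c := by
  rw [injective_iff_map_eq_zero]
  intro z hz
  obtain ⟨z, rfl⟩ := hβ1 z
  have h1 : β2 (b z) = 0 := by rw [← LinearMap.comp_apply, ← e3]; exact hz
  obtain ⟨w, hw⟩ := (h2 _).1 h1
  have h3 : α3 (a' w) = 0 := by
    rw [← LinearMap.comp_apply, ← e2, LinearMap.comp_apply, hw, ← LinearMap.comp_apply, hb']; rfl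
  have h4 : a' w = 0 := hα3 (by rw [h3, map_zero])
  obtain ⟨t, rfl⟩ := (ha _).1 h4
  have h5 : z = α1 t := by
    apply hb
    rw [← hw, ← LinearMap.comp_apply, ← e1]; rfl
  rw [h5, ← LinearMap.comp_apply, hαβ1]; rfl

section
variable {R : Type*} [CommRing R] {K F M N' P N : Type*}
  [AddCommGroup K] [AddCommGroup F] [AddCommGroup M] [AddCommGroup N'] [AddCommGroup P]
  [AddCommGroup N] [Module R K] [Module R F] [Module R M] [Module R N'] [Module R P] [Module R N]
  (i : K →ₗ[R] F) (g : F →ₗ[R] M) (j : N' →ₗ[R] P) (f : P →ₗ[R] N)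

lemma tor_sym1 [Module.Flat R F] (hig : Function.Exact i g) (hg : Function.Surjective g)
    (hj : Function.Injective j) (hjf : Function.Exact j f) (hf : Function.Surjective f)
    (h : Function.Injective (i.rTensor N)) : Function.Injective (j.lTensor M) := by
  refine chase (j.lTensor K) (f.lTensor K) (j.lTensor F) (f.lTensor F) (j.lTensor M)
    (i.rTensor N') (g.rTensor N') (i.rTensor P) (g.rTensor P) (i.rTensor N)
    (lTensor_exact K hjf hf) (Module.Flat.lTensor_preserves_injective_linearMap j hj) ?_
    (LinearMap.rTensor_surjective _ hg) ?_ (rTensor_exact P hig hg) h ?_ ?_ ?_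
  · rw [← LinearMap.lTensor_comp, hjf.linearMap_comp_eq_zero, LinearMap.lTensor_zero]
  · rw [← LinearMap.rTensor_comp, hig.linearMap_comp_eq_zero, LinearMap.rTensor_zero]
  all_goals ext; rfl

lemma tor_sym2 [Module.Flat R P] (hig : Function.Exact i g) (hg : Function.Surjective g)
    (hi : Function.Injective i) (hjf : Function.Exact j f) (hf : Function.Surjective f)
    (h : Function.Injective (j.lTensor M)) : Function.Injective (i.rTensor N) := by
  refine chase (i.rTensor N') (g.rTensor N') (i.rTensor P) (g.rTensor P) (i.rTensor N)
    (j.lTensor K) (f.lTensor K) (j.lTensor F) (f.lTensor F) (j.lTensor M)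
    (rTensor_exact N' hig hg) (Module.Flat.rTensor_preserves_injective_linearMap i hi) ?_
    (LinearMap.lTensor_surjective _ hf) ?_ (lTensor_exact F hjf hf) h ?_ ?_ ?_
  · rw [← LinearMap.rTensor_comp, hig.linearMap_comp_eq_zero, LinearMap.rTensor_zero]
  · rw [← LinearMap.lTensor_comp, hjf.linearMap_comp_eq_zero, LinearMap.lTensor_zero]
  all_goals ext; rfl

end

/-- flatness from injectivity of `R/I ⊗ N' → R/I ⊗ P` -/
lemma flat_crit {R : Type u} [CommRing R] {N' P N : Type v}
  [AddCommGroup N'] [AddCommGroup P] [AddCommGroup N] [Module R N'] [Module R P] [Module R N]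
  [Module.Flat R P] (j : N' →ₗ[R] P) (f : P →ₗ[R] N) (hjf : Function.Exact j f)
  (hf : Function.Surjective f) (h : ∀ I : Ideal R, Function.Injective (j.lTensor (R ⧸ I))) :
    Module.Flat R N := by
  rw [Module.Flat.iff_rTensor_injective']
  intro I
  refine tor_sym2 I.subtype I.mkQ j f ?_ (Submodule.mkQ_surjective _) (Submodule.injective_subtype _)
    hjf hf (h I)
  rw [LinearMap.exact_iff]; simp

/-- canonical free cover -/
noncomputable abbrev cov (R : Type u) [CommRing R] (N : Type max u v) [AddCommGroup N]
    [Module R N] : (N →₀ R) →ₗ[R] N := Finsupp.linearCombination R id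

lemma cov_surj (R : Type u) [CommRing R] (N : Type max u v) [AddCommGroup N]
    [Module R N] : Function.Surjective (cov.{u, v} R N) := fun n => ⟨Finsupp.single n 1, by simp⟩

/-- iterated syzygies all the way down are flat -/
def FD (R : Type u) [CommRing R] : ℕ → (N : Type max u v) → [AddCommGroup N] → [Module R N] → Prop
  | 0, N, _, _ => Module.Flat R N
  | n + 1, N, _, _ => FD R n (LinearMap.ker (cov.{u, v} R N))

/-- vanishing of Tor_{n+1}(M, N) -/
def TV (R : Type u) [CommRing R] (M : Type u) [AddCommGroup M] [Module R M] :
    ℕ → (N : Type max u v) → [AddCommGroup N] → [Module R N] → Prop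
  | 0, N, _, _ => Function.Injective ((LinearMap.ker (cov.{u, v} R N)).subtype.lTensor M)
  | n + 1, N, _, _ => TV R M n (LinearMap.ker (cov.{u, v} R N))

lemma TV.shift {R : Type u} [CommRing R] {K F M : Type u} [AddCommGroup K] [AddCommGroup F]
    [AddCommGroup M] [Module R K] [Module R F] [Module R M] [Module.Flat R F]
    (i : K →ₗ[R] F) (g : F →ₗ[R] M) (hi : Function.Injective i) (hig : Function.Exact i g)
    (hg : Function.Surjective g) : ∀ (n : ℕ) (N : Type max u v) [AddCommGroup N] [Module R N],
    TV.{u, v} R K n N → TV.{u, v} R M (n + 1) N := by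
  intro n
  induction n with
  | zero =>
    intro N _ _ h
    refine tor_sym1 i g _ (cov.{u, v} R _) hig hg (Submodule.injective_subtype _)
      (LinearMap.exact_subtype_ker_map _) (cov_surj R _) ?_
    have h1 : Function.Injective (i.rTensor (N →₀ R) ∘ₗ
        (LinearMap.ker (cov.{u, v} R N)).subtype.lTensor K) :=
      (Module.Flat.rTensor_preserves_injective_linearMap i hi).comp h
    have h2 : i.rTensor (N →₀ R) ∘ₗ (LinearMap.ker (cov.{u, v} R N)).subtype.lTensor K =
        (LinearMap.ker (cov.{u, v} R N)).subtype.lTensor F ∘ₗ i.rTensor _ := by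
      ext; rfl
    rw [h2] at h1
    exact Function.Injective.of_comp h1
  | succ n ih =>
    intro N _ _ h
    exact ih _ h

lemma PD.tv {R : Type u} [CommRing R] [IsNoetherianRing R] : ∀ (n : ℕ) (M : Type u)
    [AddCommGroup M] [Module R M] [Module.Finite R M] (_ : PD R n M)
    (N : Type max u v) [AddCommGroup N] [Module R N], TV.{u, v} R M n N := by
  intro n
  induction n with
  | zero =>
    intro M _ _ _ h N _ _
    have : Module.Free R M := h
    exact Module.Flat.lTensor_preserves_injective_linearMap _ (Submodule.injective_subtype _)
  | succ n ih =>
    intro M _ _ _ h N _ _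
    obtain ⟨k, f, hf⟩ := Module.Finite.exists_fin' R M
    exact TV.shift _ f (Submodule.injective_subtype _) f.exact_subtype_ker_map hf n N
      (ih _ (h _ f hf) N)

lemma FD.of_tv {R : Type u} [CommRing R] : ∀ (n : ℕ) (N : Type max u v) [AddCommGroup N]
    [Module R N] (_ : ∀ I : Ideal R, TV.{u, v} R (R ⧸ I) n N), FD.{u, v} R n N := by
  intro n
  induction n with
  | zero =>
    intro N _ _ h
    exact flat_crit _ (cov.{u, v} R N) (LinearMap.exact_subtype_ker_map _) (cov_surj R _) h
  | succ n ih => intro N _ _ h; exact ih _ h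

/-- every `R`-regular sequence is weakly regular on `N` -/
def SS (R : Type u) [CommRing R] (N : Type v) [AddCommGroup N] [Module R N] : Prop :=
  ∀ xs : List R, IsRegular R xs → IsWeaklyRegular N xs

lemma SS.of_flat (R : Type u) [CommRing R] (N : Type v) [AddCommGroup N] [Module R N]
    [Module.Flat R N] : SS R N := by
  intro xs hxs
  have : IsWeaklyRegular (N ⊗[R] R) xs := hxs.1.isWeaklyRegular_lTensor
  exact ((TensorProduct.rid R N).isWeaklyRegular_congr xs).1 this

lemma mapQ_inj {R : Type u} [CommRing R] {N' P N : Type v}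
    [AddCommGroup N'] [AddCommGroup P] [AddCommGroup N] [Module R N'] [Module R P] [Module R N]
    (j : N' →ₗ[R] P) (f : P →ₗ[R] N) (hj : Function.Injective j) (hjf : Function.Exact j f)
    (hf : Function.Surjective f) (xs : List R) (h : IsWeaklyRegular N xs) :
    Function.Injective (Submodule.mapQ _ _ j
      (Submodule.smul_top_le_comap_smul_top (Ideal.ofList xs) j)) := by
  have h0 : Function.Exact (0 : PUnit.{v+1} →ₗ[R] N') j := by
    intro y
    constructor
    · intro hy; exact ⟨0, (hj (by simpa using hy)).symm⟩
    · rintro ⟨_, rfl⟩; simp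
  have := map_first_exact_on_four_term_right_exact_of_isSMulRegular_last h0 hjf hf h
  rw [injective_iff_map_eq_zero]
  intro a ha
  obtain ⟨y, hy⟩ := (this a).1 ha
  rw [← hy]
  obtain ⟨y, rfl⟩ := Submodule.mkQ_surjective _ y
  simp

lemma SS.ker {R : Type u} [CommRing R] {N' P N : Type v}
    [AddCommGroup N'] [AddCommGroup P] [AddCommGroup N] [Module R N'] [Module R P] [Module R N]
    [Module.Flat R P]
    (j : N' →ₗ[R] P) (f : P →ₗ[R] N) (hj : Function.Injective j) (hjf : Function.Exact j f)
    (hf : Function.Surjective f) (h : SS R N) : SS R N' := by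
  intro xs hxs
  constructor
  intro i hi
  have h1 : IsWeaklyRegular N (xs.take i) := by
    have := h xs hxs
    rw [← List.take_append_drop i xs, isWeaklyRegular_append_iff] at this
    exact this.1
  exact IsSMulRegular.of_injective _ (mapQ_inj j f hj hjf hf _ h1)
    ((SS.of_flat R P xs hxs).regular_mod_prev i hi)

lemma lTensor_quot_inj {R : Type u} [CommRing R] {N' P : Type v}
    [AddCommGroup N'] [AddCommGroup P] [Module R N'] [Module R P]
    (j : N' →ₗ[R] P) (I : Ideal R) (h : Function.Injective (Submodule.mapQ _ _ j
      (Submodule.smul_top_le_comap_smul_top I j))) :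
    Function.Injective (j.lTensor (R ⧸ I)) := by
  have h1 := h.comp (TensorProduct.quotTensorEquivQuotSMul N' I).injective
  have h2 : (TensorProduct.quotTensorEquivQuotSMul P I).toLinearMap ∘ₗ j.lTensor (R ⧸ I) =
    Submodule.mapQ _ _ j (Submodule.smul_top_le_comap_smul_top I j) ∘ₗ
      (TensorProduct.quotTensorEquivQuotSMul N' I).toLinearMap := by
    ext; simp
  have h3 : Function.Injective ((TensorProduct.quotTensorEquivQuotSMul P I).toLinearMap ∘ₗ
      j.lTensor (R ⧸ I)) := by rw [h2]; exact h1
  rw [LinearMap.coe_comp] at h3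
  exact Function.Injective.of_comp h3

lemma SS.flat_of_ker {d : ℕ} {R : Type u} [CommRing R] [IsLocalRing R] (hR : RegD d R)
    {N' P N : Type v}
    [AddCommGroup N'] [AddCommGroup P] [AddCommGroup N] [Module R N'] [Module R P] [Module R N]
    [Module.Flat R P] [Module.Flat R N']
    (j : N' →ₗ[R] P) (f : P →ₗ[R] N) (hj : Function.Injective j) (hjf : Function.Exact j f)
    (hf : Function.Surjective f) (h : SS R N) : Module.Flat R N := by
  have : IsNoetherianRing R := hR.1
  have key : ∀ (M : Type u) [AddCommGroup M] [Module R M] [Module.Finite R M],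
      Function.Injective (j.lTensor M) := by
    intro M _ _ hM
    induction hM using IsNoetherianRing.induction_on_isQuotientEquivQuotientPrime R with
    | subsingleton M => exact Function.injective_of_subsingleton _
    | quotient M p e =>
      have hp := p.isPrime
      obtain ⟨xs, hxs, hass⟩ := exists_isRegular_assoc hR p.asIdeal
      obtain ⟨-, a, ha⟩ := isAssociatedPrime_iff.1 hass
      let g : R →ₗ[R] R ⧸ Ideal.ofList xs := LinearMap.toSpanSingleton R _ a
      have hk : p.asIdeal = LinearMap.ker g := by
        rw [ha]; ext r; simp [g, Submodule.mem_colon_singleton]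
      let t : (R ⧸ p.asIdeal) →ₗ[R] R ⧸ Ideal.ofList xs := p.asIdeal.liftQ g hk.le
      have ht : Function.Injective t := by
        rw [← LinearMap.ker_eq_bot]; exact Submodule.ker_liftQ_eq_bot _ _ _ hk.ge
      let t' : M →ₗ[R] R ⧸ Ideal.ofList xs := t ∘ₗ e.toLinearMap
      have ht' : Function.Injective t' := ht.comp e.injective
      have h1 : Function.Injective (j.lTensor (R ⧸ Ideal.ofList xs)) :=
        lTensor_quot_inj j _ (mapQ_inj j f hj hjf hf xs (h xs hxs))
      have h2 : Function.Injective (t'.rTensor N') :=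
        Module.Flat.rTensor_preserves_injective_linearMap t' ht'
      have h3 : Function.Injective (j.lTensor (R ⧸ Ideal.ofList xs) ∘ₗ t'.rTensor N') := h1.comp h2
      have h4 : j.lTensor (R ⧸ Ideal.ofList xs) ∘ₗ t'.rTensor N' =
          t'.rTensor P ∘ₗ j.lTensor M := by ext; rfl
      rw [h4, LinearMap.coe_comp] at h3
      exact Function.Injective.of_comp h3
    | exact M₁ M₂ M₃ a b ha hb hab h1 h3 =>
      rw [injective_iff_map_eq_zero]
      intro z hz
      have e1 : j.lTensor M₃ ∘ₗ b.rTensor N' = b.rTensor P ∘ₗ j.lTensor M₂ := by ext; rfl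
      have e2 : j.lTensor M₂ ∘ₗ a.rTensor N' = a.rTensor P ∘ₗ j.lTensor M₁ := by ext; rfl
      have hz3 : b.rTensor N' z = 0 := by
        apply h3
        rw [← LinearMap.comp_apply, e1, LinearMap.comp_apply, hz, map_zero, map_zero]
      obtain ⟨w, rfl⟩ := (rTensor_exact N' hab hb z).1 hz3
      rw [← LinearMap.comp_apply, e2, LinearMap.comp_apply] at hz
      have hw : j.lTensor M₁ w = 0 :=
        Module.Flat.rTensor_preserves_injective_linearMap (M := P) a ha (by rw [hz, map_zero])
      have hw : w = 0 := h1 (by rw [hw, map_zero])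
      rw [hw, map_zero]
  exact flat_crit j f hjf hf (fun I => key _)

lemma SS.flat {d : ℕ} {R : Type u} [CommRing R] [IsLocalRing R] (hR : RegD d R) :
    ∀ (n : ℕ) (N : Type max u v) [AddCommGroup N] [Module R N], FD.{u, v} R n N → SS R N →
      Module.Flat R N := by
  intro n
  induction n with
  | zero => intro N _ _ h _; exact h
  | succ n ih =>
    intro N _ _ h hS
    have hK : SS R (LinearMap.ker (cov.{u, v} R N)) := SS.ker _ (cov.{u, v} R N)
      (Submodule.injective_subtype _) (LinearMap.exact_subtype_ker_map _) (cov_surj R _) hS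
    have := ih _ h hK
    exact SS.flat_of_ker hR _ (cov.{u, v} R N)
      (Submodule.injective_subtype _) (LinearMap.exact_subtype_ker_map _) (cov_surj R _) hS

lemma SS.flat' {d : ℕ} {R : Type u} [CommRing R] [IsLocalRing R] (hR : RegD d R)
    (N : Type v) [AddCommGroup N] [Module R N] (hS : SS R N) : Module.Flat R N := by
  have : IsNoetherianRing R := hR.1
  have e : ULift.{u} N ≃ₗ[R] N := ULift.moduleEquiv
  have : Module.Flat R (ULift.{u} N) := SS.flat.{u, v} hR d _
    (FD.of_tv d _ fun I => PD.tv d _ (RegD.pd d R hR _) _)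
    (fun xs hxs => (e.isWeaklyRegular_congr xs).2 (hS xs hxs))
  exact Module.Flat.of_linearEquiv e.symm

lemma RegD.of_isRegularLocal {R : Type u} [CommRing R] (h : IsRegularLocal R) :
    ∃ d, RegD d R := by
  obtain ⟨hN, hL, s, hs, hc⟩ := h
  refine ⟨s.card, hN, hL, hc.symm, s.toList, by simp, ?_⟩
  rw [← hs]
  simp [Ideal.ofList]

lemma radical_eq_max {d : ℕ} {R : Type u} [CommRing R] [IsLocalRing R] (h : RegD d R)
    (xs : List R) (hxs : IsRegular R xs) (hl : xs.length = d) :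
    (Ideal.ofList xs).radical = maximalIdeal R := by
  have hdim := (isRegular_length_le h xs hxs).1
  have hle : Ideal.ofList xs ≤ maximalIdeal R := Ideal.span_le.2 (IsRegular.mem_max hxs)
  apply le_antisymm
  · exact (IsLocalRing.maximalIdeal.isMaximal R).isPrime.radical_le_iff.2 hle
  · rw [Ideal.radical_eq_sInf]
    refine le_sInf ?_
    rintro p ⟨hp, hpp⟩
    have h3 := coheight_le_quot (Ideal.ofList xs) ⟨p, hpp⟩ hp
    have h4 : (Order.coheight (⟨p, hpp⟩ : PrimeSpectrum R) : WithBot ℕ∞) + d ≤ d := by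
      calc _ ≤ ringKrullDim (R ⧸ Ideal.ofList xs) + xs.length := by rw [hl]; gcongr
        _ = d := hdim
    have h5 : Order.coheight (⟨p, hpp⟩ : PrimeSpectrum R) + d ≤ 0 + d := by
      rw [zero_add]; exact_mod_cast h4
    have h6 : Order.coheight (⟨p, hpp⟩ : PrimeSpectrum R) ≤ 0 :=
      (ENat.add_le_add_iff_right (ENat.natCast_ne_top d)).1 h5
    have h7 := Order.coheight_eq_zero.1 (le_antisymm h6 bot_le)
    exact h7 (b := ⟨maximalIdeal R, inferInstance⟩) (IsLocalRing.le_maximalIdeal hpp.ne_top)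

/-- If `R` is a regular local ring and `B` is a big Cohen–Macaulay
algebra over `R`, then `R → B` is faithfully flat, and hence `IB ∩ R = I` for every ideal
`I ⊆ R`. -/
theorem stmt12 {R : Type*} [CommRing R] [IsLocalRing R] (hreg : IsRegularLocal R)
    (B : Type*) [CommRing B] [Algebra R B]
    (hB : IsBigCohenMacaulay R ‹IsLocalRing R› B) :
    Module.FaithfullyFlat R B ∧
      ∀ I : Ideal R, (Ideal.map (algebraMap R B) I).comap (algebraMap R B) = I := by
  obtain ⟨d, hR⟩ := RegD.of_isRegularLocal hreg
  have hdim : ringKrullDim R = d := by obtain ⟨_, _, h, _⟩ := hR; exact h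
  have hfull : ∀ xs : List R, IsRegular R xs → xs.length = d →
      IsRegular B (xs.map (algebraMap R B)) := fun xs hxs hl =>
    hB xs (by rw [hdim, hl]) (IsRegular.mem_max hxs) (radical_eq_max hR xs hxs hl)
  have hflat : Module.Flat R B := by
    refine SS.flat' hR B ?_
    intro xs hxs
    obtain ⟨k, hk⟩ := Nat.exists_eq_add_of_le (isRegular_length_le hR xs hxs).2
    obtain ⟨ys, hyl, hys⟩ := isRegular_extend_full hR k xs hxs hk.symm
    have h1 := (hfull (xs ++ ys) hys (by rw [List.length_append, hyl, hk])).1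
    rw [isWeaklyRegular_map_algebraMap_iff, isWeaklyRegular_append_iff] at h1
    exact h1.1
  have hff : Module.FaithfullyFlat R B := by
    refine ⟨fun {m} hm => ?_⟩
    rw [IsLocalRing.eq_maximalIdeal hm]
    obtain ⟨zs, hl, hzr, hz⟩ := RegD.exists_regular d R hR
    have h1 := (hfull zs hzr hl).top_ne_smul
    rw [← Ideal.map_ofList, hz] at h1
    intro h2
    apply h1
    rw [Ideal.smul_top_eq_map] at h2
    have h3 : Ideal.map (algebraMap R B) (maximalIdeal R) = ⊤ := by
      rwa [Submodule.restrictScalars_eq_top_iff] at h2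
    rw [h3]; simp
  exact ⟨hff, fun I => Ideal.comap_map_eq_self_of_faithfullyFlat I⟩
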